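/- Let n ≥ 1 and let K ⊂ ℝⁿ be a convex body containing the origin in its interior with G_K = G_{K°} = 0. Then the determinant of the Hessian matrix of F_K at (0,0) (a 2n×2n matrix) equals ((n+1)·vp(K))^{2n} · det( (n+2)²·cov(K°)·cov(K) − I_n ). -/

import Mathlib

open MeasureTheory RealInnerProductSpace

noncomputable section

/-- The polar body `K° = {y | ⟨x, y⟩ ≤ 1 for all x ∈ K}`. -/
def polarBody {n : ℕ} (K : Set (EuclideanSpace ℝ (Fin n))) : Set (EuclideanSpace ℝ (Fin n)) :=
  {y | ∀ x ∈ K, ⟪x, y⟫ ≤ 1}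

/-- The volume product `vp(K) = |K| · |K°|`. -/
def vp {n : ℕ} (K : Set (EuclideanSpace ℝ (Fin n))) : ℝ :=
  (volume K).toReal * (volume (polarBody K)).toReal

/-- The barycenter `G_A = |A|⁻¹ ∫_A x dx`. -/
def bary {n : ℕ} (A : Set (EuclideanSpace ℝ (Fin n))) : EuclideanSpace ℝ (Fin n) :=
  (volume A).toReal⁻¹ • ∫ x in A, x

/-- The covariance matrix `cov(K)_{ij} = |K|⁻¹ ∫_K x_i x_j dx`. -/
def covM {n : ℕ} (K : Set (EuclideanSpace ℝ (Fin n))) : Matrix (Fin n) (Fin n) ℝ :=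
  Matrix.of fun i j => (volume K).toReal⁻¹ * ∫ x in K, x i * x j

/-- The functional `F_K(x, ξ) = vp((K° + ξ)° + x)`. -/
def FK {n : ℕ} (K : Set (EuclideanSpace ℝ (Fin n)))
    (p : EuclideanSpace ℝ (Fin n) × EuclideanSpace ℝ (Fin n)) : ℝ :=
  vp ((fun y => y + p.1) '' polarBody ((fun y => y + p.2) '' polarBody K))

/-- The standard basis of `ℝⁿ × ℝⁿ` indexed by `Fin n ⊕ Fin n`. -/
def basisVec {n : ℕ} (a : Fin n ⊕ Fin n) :
    EuclideanSpace ℝ (Fin n) × EuclideanSpace ℝ (Fin n) :=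
  match a with
  | .inl i => (EuclideanSpace.single i 1, 0)
  | .inr j => (0, EuclideanSpace.single j 1)

/-!
The polar body of `A + ξ` is the image of `A°` under the projective map `y ↦ y / (1 + ⟪ξ, y⟫)`,
whose Jacobian determinant is `(1 + ⟪ξ, y⟫)^{-(n+1)}`. Together with the bipolar theorem this gives,
for `(x, ξ)` near the origin,
`F_K(x, ξ) = ∫_K (1 + ⟪ξ, y⟫)^{-(n+1)} dy · ∫_{K°} (1 + ⟪x, y + ξ⟫)^{-(n+1)} dy`.
Differentiate twice under the integral signs. The first derivatives of both factors at the origin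
are multiples of the barycenters and vanish, so only the second derivatives of the factors survive.
Up to scalars they are the covariance matrices of `K` and `K°` on the diagonal, while the bilinear
term `⟪x, ξ⟫` of the second factor contributes the off-diagonal blocks `-I`. A block matrix with
diagonal blocks `A`, `D` and off-diagonal blocks `-I` has determinant `det (A D - I)`.
-/

open scoped Topology ContDiff

section SecondDerivative

variable {V W : Type*} [NormedAddCommGroup V] [NormedSpace ℝ V]
  [NormedAddCommGroup W] [NormedSpace ℝ W]

lemma fderiv_fderiv_apply {f : V → W} {z : V} (hf : DifferentiableAt ℝ (fderiv ℝ f) z) (k h : V) :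
    fderiv ℝ (fderiv ℝ f) z k h = fderiv ℝ (fun w => fderiv ℝ f w h) z k := by
  simp [fderiv_clm_apply hf (differentiableAt_const h)]

lemma fderiv_fderiv_mul_apply {f g : V → ℝ} {z : V}
    (hf : ∀ᶠ w in 𝓝 z, DifferentiableAt ℝ f w) (hf' : DifferentiableAt ℝ (fderiv ℝ f) z)
    (hg : ∀ᶠ w in 𝓝 z, DifferentiableAt ℝ g w) (hg' : DifferentiableAt ℝ (fderiv ℝ g) z)
    (k h : V) :
    fderiv ℝ (fderiv ℝ fun w => f w * g w) z k h =
      f z * fderiv ℝ (fderiv ℝ g) z k h + fderiv ℝ f z k * fderiv ℝ g z h +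
        (g z * fderiv ℝ (fderiv ℝ f) z k h + fderiv ℝ g z k * fderiv ℝ f z h) := by
  have hfg : fderiv ℝ (fun w => f w * g w) =ᶠ[𝓝 z]
      fun w => f w • fderiv ℝ g w + g w • fderiv ℝ f w := by
    filter_upwards [hf, hg] with w hfw hgw using fderiv_fun_mul hfw hgw
  have hsum := (hf.self_of_nhds.hasFDerivAt.fun_smul hg'.hasFDerivAt).fun_add
    (hg.self_of_nhds.hasFDerivAt.fun_smul hf'.hasFDerivAt)
  rw [hfg.fderiv_eq, hsum.fderiv]
  simp

lemma fderiv_fderiv_comp_apply {φ : ℝ → ℝ} {u : V → ℝ} {z : V}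
    (hφ : ContDiffAt ℝ 2 φ (u z)) (hu : ContDiffAt ℝ 2 u z) (k h : V) :
    fderiv ℝ (fderiv ℝ fun w => φ (u w)) z k h =
      deriv (deriv φ) (u z) * fderiv ℝ u z k * fderiv ℝ u z h +
        deriv φ (u z) * fderiv ℝ (fderiv ℝ u) z k h := by
  have hu1 : DifferentiableAt ℝ u z := hu.differentiableAt two_ne_zero
  have hu2 : DifferentiableAt ℝ (fderiv ℝ u) z :=
    (hu.fderiv_right (m := 1) le_rfl).differentiableAt one_ne_zero
  have hφ2 : DifferentiableAt ℝ (deriv φ) (u z) :=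
    ((hφ.fderiv_right (m := 1) le_rfl).clm_apply contDiffAt_const).differentiableAt one_ne_zero
  have hchain : fderiv ℝ (fun w => φ (u w)) =ᶠ[𝓝 z] fun w => deriv φ (u w) • fderiv ℝ u w := by
    filter_upwards [hu.eventually (by simp), hu.continuousAt.eventually (hφ.eventually (by simp))]
      with w huw hφw
    exact ((hφw.differentiableAt two_ne_zero).hasDerivAt.comp_hasFDerivAt w
      (huw.differentiableAt two_ne_zero).hasFDerivAt).fderiv
  have hderiv : HasFDerivAt (fun w => deriv φ (u w)) (deriv (deriv φ) (u z) • fderiv ℝ u z) z :=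
    hφ2.hasDerivAt.comp_hasFDerivAt z hu1.hasFDerivAt
  rw [hchain.fderiv_eq, (hderiv.fun_smul hu2.hasFDerivAt).fderiv]
  simp only [add_apply, smul_apply, ContinuousLinearMap.smulRight_apply, smul_eq_mul]
  ring

end SecondDerivative

section InversePower

variable {V : Type*} [NormedAddCommGroup V] [NormedSpace ℝ V] {u : V → ℝ} {z : V}

lemma deriv_inv_pow (p : ℕ) :
    deriv (fun t : ℝ => (t ^ p)⁻¹) = fun t => -(p : ℝ) * t ^ (-(p : ℤ) - 1) := by
  have hzpow : (fun t : ℝ => (t ^ p)⁻¹) = fun t => t ^ (-(p : ℤ)) := by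
    simp only [zpow_neg, zpow_natCast]
  rw [hzpow, deriv_zpow']
  push_cast
  rfl

lemma deriv_deriv_inv_pow (p : ℕ) :
    deriv (deriv fun t : ℝ => (t ^ p)⁻¹) = fun t => (p : ℝ) * (p + 1) * t ^ (-(p : ℤ) - 2) := by
  ext t
  rw [deriv_inv_pow, deriv_const_mul_field, deriv_zpow, sub_sub, one_add_one_eq_two]
  push_cast
  ring

lemma contDiffAt_inv_pow {m : ℕ∞ω} (p : ℕ) (hu : ContDiffAt ℝ m u z) (hz : u z = 1) :
    ContDiffAt ℝ m (fun w => (u w ^ p)⁻¹) z :=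
  (hu.pow p).inv (by simp [hz])

lemma fderiv_inv_pow_apply (p : ℕ) (hu : DifferentiableAt ℝ u z) (hz : u z = 1) (h : V) :
    fderiv ℝ (fun w => (u w ^ p)⁻¹) z h = -p * fderiv ℝ u z h := by
  have hφ : DifferentiableAt ℝ (fun t : ℝ => (t ^ p)⁻¹) (u z) :=
    (differentiableAt_pow p).fun_inv (by simp [hz])
  have hcomp : HasFDerivAt (fun w => (u w ^ p)⁻¹)
      (deriv (fun t : ℝ => (t ^ p)⁻¹) (u z) • fderiv ℝ u z) z :=
    hφ.hasDerivAt.comp_hasFDerivAt z hu.hasFDerivAt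
  rw [hcomp.fderiv, deriv_inv_pow, hz]
  simp

lemma fderiv_fderiv_inv_pow_apply (p : ℕ) (hu : ContDiffAt ℝ 2 u z) (hz : u z = 1) (k h : V) :
    fderiv ℝ (fderiv ℝ fun w => (u w ^ p)⁻¹) z k h =
      p * (p + 1) * (fderiv ℝ u z k * fderiv ℝ u z h) - p * fderiv ℝ (fderiv ℝ u) z k h := by
  have hφ : ContDiffAt ℝ 2 (fun t : ℝ => (t ^ p)⁻¹) (u z) :=
    contDiffAt_inv_pow p contDiffAt_id hz
  rw [fderiv_fderiv_comp_apply hφ hu, deriv_deriv_inv_pow, deriv_inv_pow, hz]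
  simp only [one_zpow, mul_one]
  ring

end InversePower

section ParametricIntegral

variable {V E W : Type*} [NormedAddCommGroup V] [NormedSpace ℝ V]
  [NormedAddCommGroup E] [NormedSpace ℝ E] [NormedAddCommGroup W] [NormedSpace ℝ W]
  {f : V → E → W} {z₀ : V}

lemma contDiffAt_fderiv_left {m n : ℕ∞ω} {v : E}
    (hf : ContDiffAt ℝ n (Function.uncurry f) (z₀, v)) (hmn : m + 1 ≤ n) :
    ContDiffAt ℝ m (Function.uncurry fun z v => fderiv ℝ (f · v) z) (z₀, v) := by
  have hswap : ContDiffAt ℝ n (Function.uncurry fun (p : V × E) z => f z p.2) ((z₀, v), z₀) :=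
    ContDiffAt.comp ((z₀, v), z₀) (f := fun q : (V × E) × V => (q.2, q.1.2)) hf (by fun_prop)
  exact hswap.fderiv contDiffAt_fst hmn

lemma continuousOn_fderiv_left {A : Set E}
    (hf : ∀ v ∈ A, ContDiffAt ℝ 1 (Function.uncurry f) (z₀, v)) :
    ContinuousOn (fun v => fderiv ℝ (f · v) z₀) A := fun v hv =>
  ((contDiffAt_fderiv_left (m := 0) (hf v hv) (by simp)).continuousAt.comp
    (f := fun v => (z₀, v)) (by fun_prop)).continuousWithinAt

variable [MeasurableSpace E] [OpensMeasurableSpace E] {μ : Measure E}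
  [IsFiniteMeasureOnCompacts μ] {A : Set E}

theorem hasFDerivAt_setIntegral_of_contDiffAt (hA : IsCompact A)
    (hf : ∀ v ∈ A, ContDiffAt ℝ 1 (Function.uncurry f) (z₀, v)) :
    HasFDerivAt (fun z => ∫ v in A, f z v ∂μ) (∫ v in A, fderiv ℝ (f · v) z₀ ∂μ) z₀ := by
  have hslice {z : V} {v : E} (h : ContDiffAt ℝ 1 (Function.uncurry f) (z, v)) :
      ContinuousAt (f z) v :=
    h.continuousAt.comp (f := fun v => (z, v)) (by fun_prop)
  have hfderiv : ∀ v ∈ A,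
      ContinuousAt (Function.uncurry fun z v => fderiv ℝ (f · v) z) (z₀, v) :=
    fun v hv => (contDiffAt_fderiv_left (m := 0) (hf v hv) (by simp)).continuousAt
  have hcont := continuousOn_fderiv_left hf
  obtain ⟨C, hC⟩ := hA.exists_bound_of_continuousOn hcont
  have hsmooth : ∀ᶠ z in 𝓝 z₀, ∀ v ∈ A, ContDiffAt ℝ 1 (Function.uncurry f) (z, v) :=
    hA.eventually_forall_of_forall_eventually fun v hv => (hf v hv).eventually (by simp)
  have hbound : ∀ᶠ z in 𝓝 z₀, ∀ v ∈ A, ‖fderiv ℝ (f · v) z‖ < C + 1 :=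
    hA.eventually_forall_of_forall_eventually fun v hv =>
      (hfderiv v hv).norm.eventually_lt_const ((hC v hv).trans_lt (lt_add_one C))
  have hint : ∀ᶠ z in 𝓝 z₀, IntegrableOn (f z) A μ := hsmooth.mono fun z hz =>
    ContinuousOn.integrableOn_compact hA fun v hv => (hslice (hz v hv)).continuousWithinAt
  refine hasFDerivAt_integral_of_dominated_of_fderiv_le (bound := fun _ => C + 1)
    (F' := fun z v => fderiv ℝ (f · v) z) (hsmooth.and hbound)
    (hint.mono fun z hz => hz.aestronglyMeasurable) hint.self_of_nhds
    (hcont.integrableOn_compact hA).aestronglyMeasurable ?_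
    (continuousOn_const.integrableOn_compact hA) ?_
  · filter_upwards [ae_restrict_mem hA.measurableSet] with v hv z hz using (hz.2 v hv).le
  · filter_upwards [ae_restrict_mem hA.measurableSet] with v hv z hz
    have hz1 : ContDiffAt ℝ 1 (f · v) z :=
      (hz.1 v hv).comp (f := fun z => (z, v)) z (by fun_prop)
    exact (hz1.differentiableAt one_ne_zero).hasFDerivAt

theorem eventually_hasFDerivAt_setIntegral_of_contDiffAt (hA : IsCompact A)
    (hf : ∀ v ∈ A, ContDiffAt ℝ 1 (Function.uncurry f) (z₀, v)) :
    ∀ᶠ z in 𝓝 z₀,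
      HasFDerivAt (fun z => ∫ v in A, f z v ∂μ) (∫ v in A, fderiv ℝ (f · v) z ∂μ) z :=
  (hA.eventually_forall_of_forall_eventually fun v hv => (hf v hv).eventually (by simp)).mono
    fun _ => hasFDerivAt_setIntegral_of_contDiffAt hA

theorem hasFDerivAt_fderiv_setIntegral_of_contDiffAt (hA : IsCompact A)
    (hf : ∀ v ∈ A, ContDiffAt ℝ 2 (Function.uncurry f) (z₀, v)) :
    HasFDerivAt (fderiv ℝ fun z => ∫ v in A, f z v ∂μ)
      (∫ v in A, fderiv ℝ (fderiv ℝ (f · v)) z₀ ∂μ) z₀ := by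
  have hfderiv := eventually_hasFDerivAt_setIntegral_of_contDiffAt (μ := μ) hA
    fun v hv => (hf v hv).of_le one_le_two
  exact (hasFDerivAt_setIntegral_of_contDiffAt hA
    fun v hv => contDiffAt_fderiv_left (m := 1) (hf v hv) le_rfl).congr_of_eventuallyEq
      (hfderiv.mono fun z hz => hz.fderiv)

lemma fderiv_setIntegral_apply (hA : IsCompact A)
    (hf : ∀ v ∈ A, ContDiffAt ℝ 1 (Function.uncurry f) (z₀, v)) (h : V) :
    fderiv ℝ (fun z => ∫ v in A, f z v ∂μ) z₀ h = ∫ v in A, fderiv ℝ (f · v) z₀ h ∂μ := by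
  rw [(hasFDerivAt_setIntegral_of_contDiffAt hA hf).fderiv, ContinuousLinearMap.integral_apply]
  exact (continuousOn_fderiv_left hf).integrableOn_compact hA

lemma fderiv_fderiv_setIntegral_apply (hA : IsCompact A)
    (hf : ∀ v ∈ A, ContDiffAt ℝ 2 (Function.uncurry f) (z₀, v)) (k h : V) :
    fderiv ℝ (fderiv ℝ fun z => ∫ v in A, f z v ∂μ) z₀ k h =
      ∫ v in A, fderiv ℝ (fderiv ℝ (f · v)) z₀ k h ∂μ := by
  have hcont : ContinuousOn (fun v => fderiv ℝ (fderiv ℝ (f · v)) z₀) A :=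
    continuousOn_fderiv_left fun v hv => contDiffAt_fderiv_left (m := 1) (hf v hv) le_rfl
  have hint : IntegrableOn (fun v => fderiv ℝ (fderiv ℝ (f · v)) z₀ k) A μ :=
    (hcont.clm_apply continuousOn_const).integrableOn_compact hA
  rw [(hasFDerivAt_fderiv_setIntegral_of_contDiffAt hA hf).fderiv,
    ContinuousLinearMap.integral_apply (φ := fun v => fderiv ℝ (fderiv ℝ (f · v)) z₀)
      (hcont.integrableOn_compact hA),
    ContinuousLinearMap.integral_apply hint]

end ParametricIntegral

section Projective

variable {E : Type*} [NormedAddCommGroup E] [InnerProductSpace ℝ E]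

/-- The projective map `y ↦ y / (1 + ⟪ξ, y⟫)`, which carries `A°` onto `(A + ξ)°`. It is only used
where `1 + ⟪ξ, y⟫` is positive. -/
def projMap (ξ y : E) : E :=
  (1 + ⟪ξ, y⟫)⁻¹ • y

lemma injOn_projMap {ξ : E} {S : Set E} (hS : ∀ y ∈ S, 0 < 1 + ⟪ξ, y⟫) :
    Set.InjOn (projMap ξ) S := by
  intro y hy z hz hyz
  have hy0 := hS y hy
  have hz0 := hS z hz
  have hinner : ⟪ξ, y⟫ = ⟪ξ, z⟫ := by
    have h := congrArg (fun w => ⟪ξ, w⟫) hyz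
    simp only [projMap, real_inner_smul_right] at h
    field_simp at h
    linarith
  simp only [projMap, hinner] at hyz
  exact smul_right_injective E (inv_ne_zero hz0.ne') hyz

lemma hasFDerivAt_projMap {ξ y : E} (hy : 1 + ⟪ξ, y⟫ ≠ 0) :
    HasFDerivAt (projMap ξ)
      ((1 + ⟪ξ, y⟫)⁻¹ • (ContinuousLinearMap.id ℝ E +
        (innerSL ℝ ξ).smulRight (-(1 + ⟪ξ, y⟫)⁻¹ • y))) y := by
  have hden : HasFDerivAt (fun y => 1 + ⟪ξ, y⟫) (innerSL ℝ ξ) y :=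
    (innerSL ℝ ξ).hasFDerivAt.const_add 1
  refine (((hasDerivAt_inv hy).comp_hasFDerivAt y hden).smul (hasFDerivAt_id y)).congr_fderiv ?_
  ext h
  simp only [Function.comp_apply, add_apply, smul_apply, ContinuousLinearMap.smulRight_apply,
    ContinuousLinearMap.id_apply, innerSL_apply_apply, smul_add, smul_smul, smul_eq_mul, id]
  congr 2
  field_simp

lemma det_fderiv_projMap [FiniteDimensional ℝ E] {ξ y : E} (hy : 1 + ⟪ξ, y⟫ ≠ 0) :
    ((1 + ⟪ξ, y⟫)⁻¹ • (ContinuousLinearMap.id ℝ E +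
      (innerSL ℝ ξ).smulRight (-(1 + ⟪ξ, y⟫)⁻¹ • y))).det =
      ((1 + ⟪ξ, y⟫) ^ (Module.finrank ℝ E + 1))⁻¹ := by
  have htransvection : LinearMap.det (LinearMap.transvection (innerₛₗ ℝ ξ)
      (-(1 + ⟪ξ, y⟫)⁻¹ • y)) = (1 + ⟪ξ, y⟫)⁻¹ := by
    rw [LinearMap.transvection.det, innerₛₗ_apply_apply, real_inner_smul_right]
    field_simp
    ring
  change LinearMap.det ((1 + ⟪ξ, y⟫)⁻¹ • LinearMap.transvection (innerₛₗ ℝ ξ)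
    (-(1 + ⟪ξ, y⟫)⁻¹ • y)) = _
  rw [LinearMap.det_smul, htransvection, pow_succ, mul_inv, inv_pow]

theorem measureReal_image_projMap [FiniteDimensional ℝ E] [MeasurableSpace E] [BorelSpace E]
    (μ : Measure E) [μ.IsAddHaarMeasure] {ξ : E} {S : Set E} (hS : MeasurableSet S)
    (hpos : ∀ y ∈ S, 0 < 1 + ⟪ξ, y⟫) :
    μ.real (projMap ξ '' S) = ∫ y in S, ((1 + ⟪ξ, y⟫) ^ (Module.finrank ℝ E + 1))⁻¹ ∂μ := by
  have hchange := integral_image_eq_integral_abs_det_fderiv_smul μ hS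
    (fun y hy => (hasFDerivAt_projMap (hpos y hy).ne').hasFDerivWithinAt)
    (injOn_projMap hpos) (fun _ => (1 : ℝ))
  rw [setIntegral_const, smul_eq_mul, mul_one] at hchange
  rw [hchange]
  refine setIntegral_congr_fun hS fun y hy => ?_
  have hy0 := hpos y hy
  simp only [det_fderiv_projMap hy0.ne', smul_eq_mul, mul_one]
  exact abs_of_pos (by positivity)

end Projective

section PolarBody

variable {n : ℕ} {A B : Set (EuclideanSpace ℝ (Fin n))}

lemma polarBody_eq_iInter (A : Set (EuclideanSpace ℝ (Fin n))) :
    polarBody A = ⋂ x ∈ A, {y | ⟪x, y⟫ ≤ 1} := by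
  ext; simp [polarBody]

lemma isClosed_polarBody (A : Set (EuclideanSpace ℝ (Fin n))) : IsClosed (polarBody A) := by
  rw [polarBody_eq_iInter]
  exact isClosed_biInter fun x _ => isClosed_le (by fun_prop) continuous_const

lemma convex_polarBody (A : Set (EuclideanSpace ℝ (Fin n))) : Convex ℝ (polarBody A) := by
  rw [polarBody_eq_iInter]
  exact convex_iInter₂ fun x _ => convex_halfSpace_le (innerₛₗ ℝ x).isLinear 1

lemma polarBody_anti (h : A ⊆ B) : polarBody B ⊆ polarBody A :=
  fun _ hy x hx => hy x (h hx)

lemma polarBody_closedBall {r : ℝ} (hr : 0 < r) :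
    polarBody (Metric.closedBall (0 : EuclideanSpace ℝ (Fin n)) r) = Metric.closedBall 0 r⁻¹ := by
  ext y
  rw [mem_closedBall_zero_iff, ← one_div, le_div_iff₀ hr]
  constructor
  · intro hy
    rcases eq_or_ne y 0 with rfl | hy0
    · simp
    have hnorm : ‖(r * ‖y‖⁻¹) • y‖ = r := by
      rw [norm_smul, Real.norm_of_nonneg (by positivity)]
      field_simp
    have hinner := hy ((r * ‖y‖⁻¹) • y) (mem_closedBall_zero_iff.2 hnorm.le)
    rwa [real_inner_smul_left, real_inner_self_eq_norm_sq, show r * ‖y‖⁻¹ * ‖y‖ ^ 2 = ‖y‖ * r by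
      field_simp] at hinner
  · intro hy x hx
    rw [mem_closedBall_zero_iff] at hx
    calc ⟪x, y⟫ ≤ ‖x‖ * ‖y‖ := real_inner_le_norm x y
      _ ≤ r * ‖y‖ := by gcongr
      _ ≤ 1 := by rwa [mul_comm]

lemma isCompact_polarBody (hA : 0 ∈ interior A) : IsCompact (polarBody A) := by
  obtain ⟨r, hr, hrA⟩ := Metric.nhds_basis_closedBall.mem_iff.1 (mem_interior_iff_mem_nhds.1 hA)
  refine Metric.isCompact_of_isClosed_isBounded (isClosed_polarBody A)
    ((Metric.isBounded_closedBall (x := 0) (r := r⁻¹)).subset ?_)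
  exact (polarBody_anti hrA).trans (polarBody_closedBall hr).subset

lemma zero_mem_interior_polarBody (hA : Bornology.IsBounded A) : 0 ∈ interior (polarBody A) := by
  obtain ⟨R, hR, hAR⟩ := hA.subset_closedBall_lt 0 0
  rw [mem_interior_iff_mem_nhds]
  refine Filter.mem_of_superset (Metric.closedBall_mem_nhds 0 (inv_pos.2 hR)) ?_
  exact (polarBody_closedBall hR).superset.trans (polarBody_anti hAR)

theorem polarBody_polarBody (hclosed : IsClosed A) (hconv : Convex ℝ A) (h0 : 0 ∈ A) :
    polarBody (polarBody A) = A := by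
  refine Set.Subset.antisymm (fun z hz => ?_) fun x hx y hy => real_inner_comm x y ▸ hy x hx
  by_contra hzA
  obtain ⟨f, c, hfc, hcz⟩ := geometric_hahn_banach_closed_point hconv hclosed hzA
  have hc : 0 < c := by simpa using hfc 0 h0
  set y := (InnerProductSpace.toDual ℝ _).symm f
  have hy : ∀ x, ⟪y, x⟫ = f x := fun x => by simp [y]
  have hmem : c⁻¹ • y ∈ polarBody A := fun x hx => by
    rw [real_inner_smul_right, real_inner_comm, hy, inv_mul_le_iff₀ hc, mul_one]
    exact (hfc x hx).le
  have hle := hz _ hmem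
  rw [real_inner_smul_left, hy, inv_mul_le_iff₀ hc, mul_one] at hle
  exact hcz.not_ge hle

lemma inner_lt_one_of_mem_interior {x y : EuclideanSpace ℝ (Fin n)} (hx : x ∈ interior A)
    (hy : y ∈ polarBody A) : ⟪x, y⟫ < 1 := by
  rcases eq_or_ne y 0 with rfl | hy0
  · simp
  have hopen : IsOpenMap (innerSL ℝ y) :=
    (innerSL ℝ y).isOpenMap_of_ne_zero fun h => hy0 (innerSL_inj.1 (h.trans (map_zero _).symm))
  have hle : Set.MapsTo (innerSL ℝ y) A (Set.Iic 1) := fun a ha => by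
    simpa [real_inner_comm] using hy a ha
  have hlt := hopen.mapsTo_interior hle hx
  rwa [interior_Iic, Set.mem_Iio, innerSL_apply_apply, real_inner_comm] at hlt

theorem polarBody_translate {ξ : EuclideanSpace ℝ (Fin n)} (h0 : 0 ∈ interior A)
    (hpos : ∀ y ∈ polarBody A, 0 < 1 + ⟪ξ, y⟫) :
    polarBody ((fun y => y + ξ) '' A) = projMap ξ '' polarBody A := by
  refine Set.Subset.antisymm (fun z hz => ?_) ?_
  · have hξ : ξ ∈ interior ((fun y => y + ξ) '' A) :=
      (isOpenMap_add_right ξ).image_interior_subset A ⟨0, h0, zero_add ξ⟩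
    have hden : 0 < 1 - ⟪ξ, z⟫ := sub_pos.2 (inner_lt_one_of_mem_interior hξ hz)
    refine ⟨(1 - ⟪ξ, z⟫)⁻¹ • z, fun a ha => ?_, ?_⟩
    · have haz := hz (a + ξ) ⟨a, ha, rfl⟩
      rw [inner_add_left] at haz
      rw [real_inner_smul_right, inv_mul_le_iff₀ hden]
      linarith
    · have hinv : (1 + ⟪ξ, (1 - ⟪ξ, z⟫)⁻¹ • z⟫)⁻¹ = 1 - ⟪ξ, z⟫ := by
        rw [real_inner_smul_right]
        field_simp
        ring
      rw [projMap, hinv, smul_inv_smul₀ hden.ne']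
  · rintro _ ⟨y, hy, rfl⟩ _ ⟨a, ha, rfl⟩
    rw [projMap, real_inner_smul_right, inner_add_left, inv_mul_le_iff₀ (hpos y hy)]
    linarith [hy a ha]

theorem volume_polarBody_translate {ξ : EuclideanSpace ℝ (Fin n)} (h0 : 0 ∈ interior A)
    (hpos : ∀ y ∈ polarBody A, 0 < 1 + ⟪ξ, y⟫) :
    (volume (polarBody ((fun y => y + ξ) '' A))).toReal =
      ∫ y in polarBody A, ((1 + ⟪ξ, y⟫) ^ (n + 1))⁻¹ := by
  rw [polarBody_translate h0 hpos, ← Measure.real,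
    measureReal_image_projMap volume (isClosed_polarBody A).measurableSet hpos,
    finrank_euclideanSpace_fin]

end PolarBody

section PolarIntegral

variable {V E : Type*} [NormedAddCommGroup V] [NormedSpace ℝ V]
  [NormedAddCommGroup E] [InnerProductSpace ℝ E]

lemma contDiff_one_add_inner {m : ℕ∞ω} (a b : V →L[ℝ] E) :
    ContDiff ℝ m (Function.uncurry fun (z : V) (y : E) => 1 + ⟪a z, y + b z⟫) :=
  contDiff_const.add ((a.contDiff.comp contDiff_fst).inner ℝ
    (contDiff_snd.add (b.contDiff.comp contDiff_fst)))

lemma contDiff_one_add_inner_left {m : ℕ∞ω} (a b : V →L[ℝ] E) (y : E) :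
    ContDiff ℝ m fun z => 1 + ⟪a z, y + b z⟫ :=
  contDiff_const.add (a.contDiff.inner ℝ (contDiff_const.add b.contDiff))

lemma fderiv_one_add_inner_apply (a b : V →L[ℝ] E) (y : E) (z h : V) :
    fderiv ℝ (fun z => 1 + ⟪a z, y + b z⟫) z h = ⟪a z, b h⟫ + ⟪a h, y + b z⟫ := by
  rw [fderiv_const_add, fderiv_inner_apply ℝ (by fun_prop) (by fun_prop)]
  simp

lemma fderiv_fderiv_one_add_inner_apply (a b : V →L[ℝ] E) (y : E) (z k h : V) :
    fderiv ℝ (fderiv ℝ fun z => 1 + ⟪a z, y + b z⟫) z k h = ⟪a k, b h⟫ + ⟪a h, b k⟫ := by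
  have hfderiv : ContDiff ℝ 1 (fderiv ℝ fun z => 1 + ⟪a z, y + b z⟫) :=
    (contDiff_one_add_inner_left a b y).fderiv_right (m := 1) le_rfl
  rw [fderiv_fderiv_apply (hfderiv.differentiable one_ne_zero z)]
  simp only [fderiv_one_add_inner_apply]
  have hleft : DifferentiableAt ℝ (fun z => ⟪a z, b h⟫) z :=
    a.differentiableAt.inner ℝ (differentiableAt_const _)
  have hright : DifferentiableAt ℝ (fun z => ⟪a h, y + b z⟫) z :=
    (differentiableAt_const _).inner ℝ (b.differentiableAt.const_add y)
  rw [fderiv_fun_add hleft hright, add_apply,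
    fderiv_inner_apply ℝ (by fun_prop) (by fun_prop),
    fderiv_inner_apply ℝ (by fun_prop) (by fun_prop)]
  simp

lemma contDiffAt_polarIntegrand {m : ℕ∞ω} (p : ℕ) (a b : V →L[ℝ] E) (y : E) :
    ContDiffAt ℝ m (Function.uncurry fun z y => ((1 + ⟪a z, y + b z⟫) ^ p)⁻¹) (0, y) :=
  contDiffAt_inv_pow p (contDiff_one_add_inner a b).contDiffAt (by simp)

variable [MeasurableSpace E]

/-- The integral `∫_A (1 + ⟪a z, y + b z⟫)^{-p} dy` as a function of `z`. For `p = n + 1`, a convex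
body `A` in `ℝⁿ` with `0` in its interior and `z` near `0`, it is the volume of
`((A + b z)° + a z)°`, so a choice of the linear maps `a` and `b` prescribes the translations. -/
def polarIntegral (μ : Measure E) (A : Set E) (p : ℕ) (a b : V →L[ℝ] E) (z : V) : ℝ :=
  ∫ y in A, ((1 + ⟪a z, y + b z⟫) ^ p)⁻¹ ∂μ

variable {μ : Measure E} {A : Set E}

lemma polarIntegral_zero (p : ℕ) (a b : V →L[ℝ] E) :
    polarIntegral μ A p a b 0 = μ.real A := by
  simp [polarIntegral]

variable [BorelSpace E] [IsFiniteMeasureOnCompacts μ]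

lemma eventually_differentiableAt_polarIntegral (hA : IsCompact A) (p : ℕ) (a b : V →L[ℝ] E) :
    ∀ᶠ z in 𝓝 0, DifferentiableAt ℝ (polarIntegral μ A p a b) z :=
  (eventually_hasFDerivAt_setIntegral_of_contDiffAt hA
    fun y _ => contDiffAt_polarIntegrand p a b y).mono fun _ hz => hz.differentiableAt

lemma differentiableAt_fderiv_polarIntegral (hA : IsCompact A) (p : ℕ) (a b : V →L[ℝ] E) :
    DifferentiableAt ℝ (fderiv ℝ (polarIntegral μ A p a b)) 0 :=
  (hasFDerivAt_fderiv_setIntegral_of_contDiffAt hA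
    fun y _ => contDiffAt_polarIntegrand p a b y).differentiableAt

lemma fderiv_polarIntegral_zero [CompleteSpace E] (hA : IsCompact A) (hbary : ∫ y in A, y ∂μ = 0)
    (p : ℕ) (a b : V →L[ℝ] E) :
    fderiv ℝ (polarIntegral μ A p a b) 0 = 0 := by
  ext h
  have hid : IntegrableOn (fun y : E => y) A μ := continuousOn_id.integrableOn_compact hA
  calc fderiv ℝ (polarIntegral μ A p a b) 0 h
      = ∫ y in A, -p * ⟪a h, y⟫ ∂μ := by
        refine (fderiv_setIntegral_apply hA
          (fun y _ => contDiffAt_polarIntegrand p a b y) h).trans ?_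
        congr 1 with y
        rw [fderiv_inv_pow_apply p
          ((contDiff_one_add_inner_left a b y).differentiable one_ne_zero 0) (by simp),
          fderiv_one_add_inner_apply]
        simp
    _ = 0 := by rw [integral_const_mul, integral_inner hid, hbary, inner_zero_right, mul_zero]

lemma fderiv_fderiv_polarIntegral_zero_apply (hA : IsCompact A) (p : ℕ) (a b : V →L[ℝ] E)
    (k h : V) :
    fderiv ℝ (fderiv ℝ (polarIntegral μ A p a b)) 0 k h =
      p * (p + 1) * ∫ y in A, ⟪a k, y⟫ * ⟪a h, y⟫ ∂μ -
        p * (μ.real A * (⟪a k, b h⟫ + ⟪a h, b k⟫)) := by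
  have hint : IntegrableOn (fun y => ⟪a k, y⟫ * ⟪a h, y⟫) A μ :=
    ContinuousOn.integrableOn_compact hA (by fun_prop)
  calc fderiv ℝ (fderiv ℝ (polarIntegral μ A p a b)) 0 k h
      = ∫ y in A, (p * (p + 1) * (⟪a k, y⟫ * ⟪a h, y⟫) -
          p * (⟪a k, b h⟫ + ⟪a h, b k⟫)) ∂μ := by
        refine (fderiv_fderiv_setIntegral_apply hA
          (fun y _ => contDiffAt_polarIntegrand p a b y) k h).trans ?_
        congr 1 with y
        rw [fderiv_fderiv_inv_pow_apply p
          (contDiff_one_add_inner_left a b y).contDiffAt (by simp),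
          fderiv_fderiv_one_add_inner_apply]
        simp only [fderiv_one_add_inner_apply, map_zero, inner_zero_left, add_zero, zero_add]
    _ = _ := by
        rw [integral_sub (hint.const_mul _) (continuousOn_const.integrableOn_compact hA),
          integral_const_mul, setIntegral_const, smul_eq_mul]
        ring

end PolarIntegral

section FunctionalHessian

variable {n : ℕ} {K : Set (EuclideanSpace ℝ (Fin n))}

lemma vp_polarBody_translate {P : Set (EuclideanSpace ℝ (Fin n))}
    {x ξ : EuclideanSpace ℝ (Fin n)} (hP : IsCompact P) (hconv : Convex ℝ P)
    (h0 : 0 ∈ interior P) (hξ : -ξ ∈ P)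
    (hposξ : ∀ y ∈ polarBody P, 0 < 1 + ⟪ξ, y⟫) (hposx : ∀ y ∈ P, 0 < 1 + ⟪x, y + ξ⟫) :
    vp ((fun y => y + x) '' polarBody ((fun y => y + ξ) '' P)) =
      (∫ y in polarBody P, ((1 + ⟪ξ, y⟫) ^ (n + 1))⁻¹) *
        ∫ y in P, ((1 + ⟪x, y + ξ⟫) ^ (n + 1))⁻¹ := by
  have hcomp : IsCompact ((fun y => y + ξ) '' P) := hP.image (by fun_prop)
  have hbipolar : polarBody (polarBody ((fun y => y + ξ) '' P)) = (fun y => y + ξ) '' P :=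
    polarBody_polarBody hcomp.isClosed (by simpa [add_comm] using hconv.translate ξ)
      ⟨-ξ, hξ, neg_add_cancel ξ⟩
  have hvol : (volume (polarBody ((fun y => y + x) '' polarBody ((fun y => y + ξ) '' P)))).toReal =
      ∫ y in P, ((1 + ⟪x, y + ξ⟫) ^ (n + 1))⁻¹ := by
    rw [volume_polarBody_translate (zero_mem_interior_polarBody hcomp.isBounded), hbipolar,
      (measurePreserving_add_right volume ξ).setIntegral_image_emb
        (measurableEmbedding_addRight ξ)]
    rwa [hbipolar, Set.forall_mem_image]
  rw [vp, hvol, Set.image_add_right, measure_preimage_add_right,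
    volume_polarBody_translate h0 hposξ]

theorem FK_eventuallyEq (hK : IsCompact K) (hconv : Convex ℝ K) (h0 : 0 ∈ interior K) :
    FK K =ᶠ[𝓝 0] fun z =>
      polarIntegral volume K (n + 1) (ContinuousLinearMap.snd ℝ _ _) 0 z *
        polarIntegral volume (polarBody K) (n + 1) (ContinuousLinearMap.fst ℝ _ _)
          (ContinuousLinearMap.snd ℝ _ _) z := by
  have hP := isCompact_polarBody h0
  have hP0 := zero_mem_interior_polarBody hK.isBounded
  have hbipolar := polarBody_polarBody hK.isClosed hconv (interior_subset h0)
  have hposK : ∀ᶠ z : EuclideanSpace ℝ (Fin n) × EuclideanSpace ℝ (Fin n) in 𝓝 0,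
      ∀ y ∈ K, 0 < 1 + ⟪z.2, y⟫ :=
    hK.eventually_forall_of_forall_eventually fun y _ =>
      continuousAt_const.eventually_lt (by fun_prop) (by simp)
  have hposP : ∀ᶠ z : EuclideanSpace ℝ (Fin n) × EuclideanSpace ℝ (Fin n) in 𝓝 0,
      ∀ y ∈ polarBody K, 0 < 1 + ⟪z.1, y + z.2⟫ :=
    hP.eventually_forall_of_forall_eventually fun y _ =>
      continuousAt_const.eventually_lt (by fun_prop) (by simp)
  have hneg : ∀ᶠ z : EuclideanSpace ℝ (Fin n) × EuclideanSpace ℝ (Fin n) in 𝓝 0,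
      -z.2 ∈ polarBody K :=
    ContinuousAt.eventually_mem
      (f := fun z : EuclideanSpace ℝ (Fin n) × EuclideanSpace ℝ (Fin n) => -z.2) (by fun_prop)
      (by simpa using mem_interior_iff_mem_nhds.1 hP0)
  filter_upwards [hposK, hposP, hneg] with z hzK hzP hz
  have hvp := vp_polarBody_translate hP (convex_polarBody K) hP0 hz (by rwa [hbipolar]) hzP
  rw [hbipolar] at hvp
  simpa [FK, polarIntegral] using hvp

theorem fderiv_fderiv_FK_apply (hK : IsCompact K) (hconv : Convex ℝ K) (h0 : 0 ∈ interior K)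
    (hbK : ∫ y in K, y = 0) (hbP : ∫ y in polarBody K, y = 0)
    (k h : EuclideanSpace ℝ (Fin n) × EuclideanSpace ℝ (Fin n)) :
    fderiv ℝ (fderiv ℝ (FK K)) 0 k h =
      ((n : ℝ) + 1) *
        ((n + 2) * (volume.real K * (∫ y in polarBody K, ⟪k.1, y⟫ * ⟪h.1, y⟫) +
            volume.real (polarBody K) * ∫ y in K, ⟪k.2, y⟫ * ⟪h.2, y⟫) -
          vp K * (⟪k.1, h.2⟫ + ⟪h.1, k.2⟫)) := by
  have hP := isCompact_polarBody h0
  rw [(FK_eventuallyEq hK hconv h0).fderiv.fderiv_eq,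
    fderiv_fderiv_mul_apply (eventually_differentiableAt_polarIntegral hK _ _ _)
      (differentiableAt_fderiv_polarIntegral hK _ _ _)
      (eventually_differentiableAt_polarIntegral hP _ _ _)
      (differentiableAt_fderiv_polarIntegral hP _ _ _),
    fderiv_polarIntegral_zero hK hbK, fderiv_polarIntegral_zero hP hbP,
    fderiv_fderiv_polarIntegral_zero_apply hK, fderiv_fderiv_polarIntegral_zero_apply hP,
    polarIntegral_zero, polarIntegral_zero]
  simp only [vp, Measure.real, zero_apply, ContinuousLinearMap.coe_fst',
    ContinuousLinearMap.coe_snd', inner_zero_right, mul_zero, add_zero, sub_zero]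
  push_cast
  ring

end FunctionalHessian

section HessianMatrix

variable {n : ℕ} {A K : Set (EuclideanSpace ℝ (Fin n))}

lemma volume_real_ne_zero (hA : IsCompact A) (h0 : 0 ∈ interior A) : volume.real A ≠ 0 :=
  (ENNReal.toReal_pos (Measure.measure_pos_of_nonempty_interior volume ⟨0, h0⟩).ne'
    hA.measure_lt_top.ne).ne'

lemma setIntegral_eq_zero_of_bary (hA : volume.real A ≠ 0) (hb : bary A = 0) :
    ∫ y in A, y = 0 :=
  (smul_eq_zero.1 hb).resolve_left (inv_ne_zero hA)

lemma setIntegral_mul_eq_covM (hA : volume.real A ≠ 0) (i j : Fin n) :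
    ∫ y in A, y i * y j = volume.real A * covM A i j :=
  (mul_inv_cancel_left₀ hA _).symm

/-- The Hessian matrix of `F_K` at the origin in the standard basis of `ℝⁿ × ℝⁿ`. -/
def hessianFK (K : Set (EuclideanSpace ℝ (Fin n))) : Matrix (Fin n ⊕ Fin n) (Fin n ⊕ Fin n) ℝ :=
  Matrix.of fun a b => fderiv ℝ (fderiv ℝ (FK K)) (0, 0) (basisVec a) (basisVec b)

theorem hessianFK_eq (hK : IsCompact K) (hconv : Convex ℝ K) (h0 : 0 ∈ interior K)
    (hbK : bary K = 0) (hbP : bary (polarBody K) = 0) :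
    hessianFK K = (((n : ℝ) + 1) * vp K) • Matrix.fromBlocks
      (((n : ℝ) + 2) • covM (polarBody K)) (-1) (-1) (((n : ℝ) + 2) • covM K) := by
  have hvK := volume_real_ne_zero hK h0
  have hvP :=
    volume_real_ne_zero (isCompact_polarBody h0) (zero_mem_interior_polarBody hK.isBounded)
  have hvp : vp K = volume.real K * volume.real (polarBody K) := rfl
  have happly := fderiv_fderiv_FK_apply hK hconv h0 (setIntegral_eq_zero_of_bary hvK hbK)
    (setIntegral_eq_zero_of_bary hvP hbP)
  ext (i | i) (j | j) <;> rw [hessianFK, Matrix.of_apply, Prod.mk_zero_zero, happly]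
  · simp only [basisVec, EuclideanSpace.inner_single_left, Real.ringHom_apply, one_mul,
      setIntegral_mul_eq_covM hvP, inner_zero_left, inner_zero_right, mul_zero, integral_zero,
      add_zero, sub_zero, Matrix.smul_apply, Matrix.fromBlocks_apply₁₁, smul_eq_mul, hvp]
    ring
  · simp [basisVec, EuclideanSpace.inner_single_left, Matrix.one_apply, eq_comm]
  · simp [basisVec, EuclideanSpace.inner_single_left, Matrix.one_apply, eq_comm]
  · simp only [basisVec, EuclideanSpace.inner_single_left, Real.ringHom_apply, one_mul,
      setIntegral_mul_eq_covM hvK, inner_zero_left, mul_zero, integral_zero,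
      zero_add, add_zero, sub_zero, Matrix.smul_apply, Matrix.fromBlocks_apply₂₂, smul_eq_mul, hvp]
    ring

end HessianMatrix

lemma det_fromBlocks_neg_one {m R : Type*} [Fintype m] [DecidableEq m] [CommRing R]
    (A D : Matrix m m R) :
    (Matrix.fromBlocks A (-1) (-1) D).det = (A * D - 1).det := by
  have hcolumns : Matrix.fromBlocks A (-1) (-1) D *
      (Matrix.fromBlocks 1 D 0 1 * Matrix.J m R) = Matrix.fromBlocks (A * D - 1) (-A) 0 1 := by
    simp [Matrix.J, Matrix.fromBlocks_multiply, sub_eq_add_neg]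
  have hdet := congrArg Matrix.det hcolumns
  rw [Matrix.det_mul, Matrix.det_mul,
    SymplecticGroup.det_eq_one (SymplecticGroup.J_mem m R)] at hdet
  simpa using hdet

theorem stmt9 {n : ℕ} (hn : 1 ≤ n) (K : Set (EuclideanSpace ℝ (Fin n)))
    (hKcomp : IsCompact K) (hKconv : Convex ℝ K)
    (hK0 : (0 : EuclideanSpace ℝ (Fin n)) ∈ interior K)
    (hbK : bary K = 0) (hbKpolar : bary (polarBody K) = 0) :
    (Matrix.of fun a b : Fin n ⊕ Fin n =>
        fderiv ℝ (fderiv ℝ (FK K)) (0, 0) (basisVec a) (basisVec b)).det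
      = (((n : ℝ) + 1) * vp K) ^ (2 * n) *
        (((n : ℝ) + 2) ^ 2 • (covM (polarBody K) * covM K) - 1).det := by
  have hscale : (((n : ℝ) + 2) • covM (polarBody K)) * (((n : ℝ) + 2) • covM K) =
      ((n : ℝ) + 2) ^ 2 • (covM (polarBody K) * covM K) := by
    rw [smul_mul_smul_comm, sq]
  calc (hessianFK K).det
      = (((n : ℝ) + 1) * vp K) ^ (2 * n) * (Matrix.fromBlocks
          (((n : ℝ) + 2) • covM (polarBody K)) (-1) (-1) (((n : ℝ) + 2) • covM K)).det := by
        rw [hessianFK_eq hKcomp hKconv hK0 hbK hbKpolar, Matrix.det_smul, Fintype.card_sum,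
          Fintype.card_fin, two_mul]
    _ = _ := by rw [det_fromBlocks_neg_one, hscale]
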